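/- There is a universal constant c > 0 such that for every n ≥ 1, every ε > 0, and every f : {0,1}^n → {0,1} that is ε-far from monotone, (1/2^n)·Σ_{x ∈ {0,1}^n} √(I_f⁻(x)) ≥ c·ε. -/

import Mathlib

open Finset

attribute [local instance] Classical.propDecidable

variable {n : ℕ}

/-- The edge of the hypercube along dimension `i` at `x` (the pair
`{x^{(i→0)}, x^{(i→1)}}`) is decreasing for `f`. -/
def decEdge (f : (Fin n → Bool) → Bool) (x : Fin n → Bool) (i : Fin n) : Prop :=
  f (Function.update x i false) = true ∧ f (Function.update x i true) = false

/-- `x` with its `i`-th coordinate flipped. -/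
def flipC (x : Fin n → Bool) (i : Fin n) : Fin n → Bool := Function.update x i (!(x i))

/-- `g` is monotone. -/
def monoB (g : (Fin n → Bool) → Bool) : Prop :=
  ∀ x y : Fin n → Bool, (∀ i, x i ≤ y i) → g x ≤ g y

/-- Distance of `f` to the set of monotone functions. -/
noncomputable def distMono (f : (Fin n → Bool) → Bool) : ℝ :=
  sInf {d : ℝ | ∃ g : (Fin n → Bool) → Bool, monoB g ∧
    d = ((univ.filter fun x => f x ≠ g x).card : ℝ) / 2 ^ n}

/-- `I_f⁻(x)`: the number of decreasing edges of `f` incident on `x`. -/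
noncomputable def Iminus (f : (Fin n → Bool) → Bool) (x : Fin n → Bool) : ℕ :=
  (univ.filter fun i => decEdge f x i).card

/-- The number of decreasing edges of `f` (each edge represented by its lower
endpoint together with its dimension). -/
noncomputable def numDecEdges (f : (Fin n → Bool) → Bool) : ℕ :=
  (univ.filter fun q : (Fin n → Bool) × Fin n => q.1 q.2 = false ∧ decEdge f q.1 q.2).card

/-- The event Capture(x, S, f). -/
def Capture (f : (Fin n → Bool) → Bool) (S : Finset (Fin n)) (x : Fin n → Bool) : Prop :=
  ∃ i ∈ S, decEdge f x i ∧ ∀ j ∈ S \ {i}, ¬ decEdge f (flipC x i) j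

/-- Hamming weight of `x` restricted to the coordinates in `M`. -/
noncomputable def wt (M : Finset (Fin n)) (x : Fin n → Bool) : ℕ :=
  (M.filter fun i => x i = true).card

/-- `g` is unate. -/
def unate (g : (Fin n → Bool) → Bool) : Prop :=
  ∃ σ : Fin n → Bool, monoB (fun x => g (fun i => xor (x i) (σ i)))

/-- Distance of `f` to the set of unate functions. -/
noncomputable def distUnate (f : (Fin n → Bool) → Bool) : ℝ :=
  sInf {d : ℝ | ∃ g : (Fin n → Bool) → Bool, unate g ∧
    d = ((univ.filter fun x => f x ≠ g x).card : ℝ) / 2 ^ n}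

/-- `g` is a `k`-junta. -/
def isJunta (k : ℕ) (g : (Fin n → Bool) → Bool) : Prop :=
  ∃ J : Finset (Fin n), J.card ≤ k ∧
    ∀ x y : Fin n → Bool, (∀ i ∈ J, x i = y i) → g x = g y

/-- Distance of `f` to the set of `k`-juntas. -/
noncomputable def distJunta (k : ℕ) (f : (Fin n → Bool) → Bool) : ℝ :=
  sInf {d : ℝ | ∃ g : (Fin n → Bool) → Bool, isJunta k g ∧
    d = ((univ.filter fun x => f x ≠ g x).card : ℝ) / 2 ^ n}

/-- `I⁻_{f,red}(x)` for the coloring `col` (an edge is identified by its lower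
endpoint along its dimension; `col e i = true` means the edge along dimension `i`
at `e` is red). -/
noncomputable def IredCol (f : (Fin n → Bool) → Bool)
    (col : (Fin n → Bool) → Fin n → Bool) (x : Fin n → Bool) : ℕ :=
  if f x = true then
    (univ.filter fun i => decEdge f x i ∧ col (Function.update x i false) i = true).card
  else 0

/-- `I⁻_{f,blue}(x)` for the coloring `col`. -/
noncomputable def IblueCol (f : (Fin n → Bool) → Bool)
    (col : (Fin n → Bool) → Fin n → Bool) (x : Fin n → Bool) : ℕ :=
  if f x = false then
    (univ.filter fun i => decEdge f x i ∧ col (Function.update x i false) i = false).card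
  else 0

/-- `Ψ_M`: the middle layer of the subcube `{0,1}^M`. -/
noncomputable def PsiSet (M : Finset (Fin n)) : Finset (↥M → Bool) :=
  univ.filter fun z => (univ.filter fun i : ↥M => z i = true).card = n / 4

/-- `x` is an erased point (for parameter `κ` and control set `M`). -/
def ErasedPt (κ : ℝ) (M : Finset (Fin n)) (x : Fin n → Bool) : Prop :=
  wt M x = n / 4 ∧ |(wt Mᶜ x : ℝ) - (n : ℝ) / 4| ≤ (n : ℝ) ^ κ

/-- `Maj(x_{M̄})`: majority on the coordinates outside `M`. -/
noncomputable def MajBar (M : Finset (Fin n)) (x : Fin n → Bool) : Bool :=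
  decide (n / 4 < wt Mᶜ x)

/-- `F` is a completion of the `D⁻` instance determined by `(M, P)`. -/
def DminusCompletion (κ : ℝ) (M : Finset (Fin n)) (P : Finset (↥M → Bool))
    (F : (Fin n → Bool) → Bool) : Prop :=
  (∀ x, wt M x < n / 4 → F x = false) ∧
  (∀ x, n / 4 < wt M x → F x = true) ∧
  (∀ x, wt M x = n / 4 → ¬ ErasedPt κ M x →
    F x = if (fun i : ↥M => x i.1) ∈ P then MajBar M x else !(MajBar M x))

/-- The function `F` of Statement 12: `F(x) = 1` iff `|x_M| > n/4`, or
`|x_M| = n/4` and `x_M ∉ P`. -/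
noncomputable def DplusF (M : Finset (Fin n)) (P : Finset (↥M → Bool))
    (x : Fin n → Bool) : Bool :=
  if n / 4 < wt M x then true
  else if wt M x = n / 4 ∧ (fun i : ↥M => x i.1) ∉ P then true
  else false

/-!
Sorting the values of `f` on the edges in each dimension, one dimension after the other, yields a
monotone function, so the distance of `f` to monotone is at most the distance that sorting in any
order moves `f`; a random order is produced by repeated inverse riffle shuffles. A shuffle whose
uniform mask splits the dimensions into `S` and its complement sorts along `S` first, and this is
compared with sorting along the complement. For fixed `x`, the value at `x` of `f` sorted along the
dimensions in `c` is a Boolean function of the mask `c`, so Talagrand's inequality bounds the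
probability that `c` and its complement disagree by the expected square root of its sensitivity.
A potential argument, which follows the sorts one at a time and uses that a sort only spreads out
the disagreements on an edge, bounds the sum over `x` of these square roots by `∑ x, √(I_f⁻ x)`.
Each shuffle therefore costs `O(∑ x, √(I_f⁻ x))`, and the next one acts on a random half of the
dimensions, for which this sum shrinks by a factor `√(1/2)` on average: the costs form a convergent
geometric series.
-/

open scoped BigOperators

section Expectation

variable {α ι : Type*} [Fintype α] [Fintype ι]

lemma expect_sqrt_le [Nonempty ι] {g : ι → ℝ} (hg : ∀ i, 0 ≤ g i) :
    𝔼 i, √(g i) ≤ √(𝔼 i, g i) := by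
  refine Real.le_sqrt_of_sq_le ?_
  simpa [Real.sq_sqrt (hg _)] using expect_mul_sq_le_sq_mul_sq univ (fun i => √(g i)) 1

lemma sqrt_sq_expect_add_sq_expect_le (a b : ι → ℝ) :
    √((𝔼 i, a i) ^ 2 + (𝔼 i, b i) ^ 2) ≤ 𝔼 i, √(a i ^ 2 + b i ^ 2) := by
  simp only [← Complex.norm_add_mul_I, Complex.ofReal_expect]
  rw [expect_mul, ← expect_add_distrib]
  exact RCLike.norm_expect_le (K := ℂ)

lemma expect_fin_cons (g : (Fin (n + 1) → α) → ℝ) :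
    𝔼 c, g c = 𝔼 a, 𝔼 c, g (Fin.cons a c) := by
  rw [← Fintype.expect_equiv (Fin.consEquiv fun _ => α) (fun p => g (Fin.cons p.1 p.2)) g
    fun _ => rfl, ← univ_product_univ, expect_product]

lemma expect_bool (g : Bool → ℝ) : 𝔼 b, g b = (g true + g false) / 2 := by
  rw [Fintype.expect_eq_sum_div_card, Fintype.sum_bool, Fintype.card_bool, Nat.cast_ofNat]

lemma expect_comp_not (g : (Fin n → Bool) → ℝ) : 𝔼 c : Fin n → Bool, g (fun i => !c i) = 𝔼 c, g c :=
  Fintype.expect_equiv (Equiv.arrowCongr (Equiv.refl _) Equiv.boolNot) _ _ fun _ => rfl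

end Expectation

section Talagrand

/-- The sensitivity of `φ` at `c`: the number of coordinates whose flip changes `φ c`. -/
def sensitivity (φ : (Fin n → Bool) → Bool) (c : Fin n → Bool) : ℕ :=
  #{i | φ (Function.update c i true) ^^ φ (Function.update c i false)}

/-- The mean of `φ` as a `0`-`1` valued function under the uniform distribution on the cube. -/
noncomputable def mean (φ : (Fin n → Bool) → Bool) : ℝ :=
  𝔼 c, ((φ c).toNat : ℝ)

lemma mean_nonneg (φ : (Fin n → Bool) → Bool) : 0 ≤ mean φ :=
  expect_nonneg fun _ _ => Nat.cast_nonneg _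

lemma mean_not (φ : (Fin n → Bool) → Bool) : mean (fun c => !φ c) = 1 - mean φ := by
  rw [mean, mean, ← Fintype.expect_const (ι := Fin n → Bool) (1 : ℝ), ← expect_sub_distrib]
  refine expect_congr rfl fun c _ => ?_
  cases φ c <;> simp

lemma mean_cons (φ : (Fin (n + 1) → Bool) → Bool) :
    mean φ = (mean (fun c => φ (Fin.cons true c)) + mean fun c => φ (Fin.cons false c)) / 2 := by
  rw [mean, expect_fin_cons, expect_bool, mean, mean]

lemma abs_mean_sub_mean_le (φ ψ : (Fin n → Bool) → Bool) :
    |mean φ - mean ψ| ≤ mean fun c => φ c ^^ ψ c := by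
  rw [mean, mean, ← expect_sub_distrib]
  refine (abs_expect_le _ _).trans (expect_le_expect fun c _ => ?_)
  rcases hφ : φ c <;> rcases hψ : ψ c <;> simp [hφ, hψ]

lemma sensitivity_cons (φ : (Fin (n + 1) → Bool) → Bool) (b : Bool) (c : Fin n → Bool) :
    sensitivity φ (Fin.cons b c) =
      sensitivity (fun c => φ (Fin.cons b c)) c +
        (φ (Fin.cons true c) ^^ φ (Fin.cons false c)).toNat := by
  simp only [sensitivity, Fin.card_filter_univ_succ, Fin.update_cons_zero, ← Fin.cons_update]
  cases φ (Fin.cons true c) ^^ φ (Fin.cons false c) <;> simp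

lemma midpoint_mul_one_sub_le (a b : ℝ) :
    (a + b) / 2 * (1 - (a + b) / 2) ≤
      (√((a * (1 - a)) ^ 2 + (a - b) ^ 2 / 8) + √((b * (1 - b)) ^ 2 + (a - b) ^ 2 / 8)) / 2 := by
  set p := a * (1 - a) with hp
  set q := b * (1 - b) with hq
  set v := (a + b) / 2 * (1 - (a + b) / 2) with hv
  have hpq : p + q = 2 * v - (a - b) ^ 2 / 2 := by rw [hp, hq, hv]; ring
  have hv4 : v ≤ 1 / 4 := by rw [hv]; linarith [sq_nonneg ((a + b) / 2 - 1 / 2)]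
  have minkowski := sqrt_sq_expect_add_sq_expect_le (fun b : Bool => if b then p else q)
    fun _ => (a - b) / √8
  simp only [expect_bool, if_true, Bool.false_eq_true, if_false, add_self_div_two, div_pow,
    Real.sq_sqrt (show (0 : ℝ) ≤ 8 by norm_num)] at minkowski
  refine (Real.le_sqrt_of_sq_le ?_).trans minkowski
  rw [hpq]
  nlinarith [mul_nonneg (sq_nonneg (a - b)) (sub_nonneg.2 hv4), sq_nonneg ((a - b) ^ 2)]

lemma sqrt_sq_add_le_expect_sqrt_sensitivity_cons (φ : (Fin (n + 1) → Bool) → Bool) (b : Bool)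
    {v : ℝ} (hv₀ : 0 ≤ v)
    (hv : v ≤ 𝔼 c, √((sensitivity (fun c => φ (Fin.cons b c)) c : ℝ) / 8)) :
    √(v ^ 2 + (mean (fun c => φ (Fin.cons true c)) - mean fun c => φ (Fin.cons false c)) ^ 2 / 8) ≤
      𝔼 c : Fin n → Bool, √((sensitivity φ (Fin.cons b c) : ℝ) / 8) := by
  let δ (c : Fin n → Bool) : Bool := φ (Fin.cons true c) ^^ φ (Fin.cons false c)
  calc
    _ ≤ √((𝔼 c, √((sensitivity (fun c => φ (Fin.cons b c)) c : ℝ) / 8)) ^ 2 +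
          (𝔼 c, ((δ c).toNat : ℝ) / √8) ^ 2) := by
      rw [← expect_div, div_pow, Real.sq_sqrt (by norm_num), ← sq_abs (_ - _)]
      gcongr
      exact abs_mean_sub_mean_le _ _
    _ ≤ 𝔼 c, √(√((sensitivity (fun c => φ (Fin.cons b c)) c : ℝ) / 8) ^ 2 +
          (((δ c).toNat : ℝ) / √8) ^ 2) := sqrt_sq_expect_add_sq_expect_le _ _
    _ = _ := by
      refine expect_congr rfl fun c _ => ?_
      have toNat_sq : ((δ c).toNat : ℝ) ^ 2 = (δ c).toNat := by cases δ c <;> simp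
      rw [sensitivity_cons, Real.sq_sqrt (by positivity), div_pow, Real.sq_sqrt (by norm_num),
        toNat_sq, ← add_div, Nat.cast_add]

-- A form of Talagrand's inequality `Var φ ≲ 𝔼 √(sensitivity φ)`; the constant `1 / 8` is one for
-- which the two-point inequality `midpoint_mul_one_sub_le` closes the induction.
theorem mean_mul_one_sub_mean_le (φ : (Fin n → Bool) → Bool) :
    mean φ * (1 - mean φ) ≤ 𝔼 c, √((sensitivity φ c : ℝ) / 8) := by
  induction n with
  | zero => cases h : φ default <;> simp [mean, sensitivity]
  | succ n ih =>
    have half (b : Bool) := sqrt_sq_add_le_expect_sqrt_sensitivity_cons φ b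
      (mul_nonneg (mean_nonneg _) (mean_not (fun c => φ (Fin.cons b c)) ▸ mean_nonneg _))
      (ih fun c => φ (Fin.cons b c))
    rw [mean_cons, expect_fin_cons, expect_bool]
    linarith [midpoint_mul_one_sub_le (mean fun c => φ (Fin.cons true c))
      (mean fun c => φ (Fin.cons false c)), half true, half false]

lemma toNat_eq_ite (b : Bool) : b.toNat = if b then 1 else 0 := by
  cases b <;> rfl

lemma toNat_xor_le (a b : Bool) : (a ^^ b).toNat ≤ a.toNat + b.toNat := by
  cases a <;> cases b <;> decide

lemma mean_xor_comp_not_le_two_mul_mean (φ : (Fin n → Bool) → Bool) :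
    mean (fun c => φ c ^^ φ fun i => !c i) ≤ 2 * mean φ := by
  calc
    _ ≤ 𝔼 c, ((φ c).toNat + (φ fun i => !c i).toNat : ℝ) := by
      refine expect_le_expect fun c _ => ?_
      exact_mod_cast toNat_xor_le (φ c) (φ fun i => !c i)
    _ = 2 * mean φ := by
      rw [expect_add_distrib, expect_comp_not fun c => ((φ c).toNat : ℝ), ← mean, two_mul]

theorem mean_xor_comp_not_le (φ : (Fin n → Bool) → Bool) :
    mean (fun c => φ c ^^ φ fun i => !c i) ≤ 2 * 𝔼 c, √(sensitivity φ c : ℝ) := by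
  have le_mean := mean_xor_comp_not_le_two_mul_mean φ
  have le_one_sub_mean := mean_xor_comp_not_le_two_mul_mean fun c => !φ c
  simp only [Bool.not_bne_not, mean_not] at le_one_sub_mean
  have talagrand : mean φ * (1 - mean φ) ≤ (𝔼 c, √(sensitivity φ c : ℝ)) / 2 := by
    rw [expect_div]
    refine (mean_mul_one_sub_mean_le φ).trans (expect_le_expect fun c _ => ?_)
    rw [Real.sqrt_div' _ (by norm_num)]
    gcongr
    exact Real.le_sqrt_of_sq_le (by norm_num)
  have le_variance : mean (fun c => φ c ^^ φ fun i => !c i) ≤ 4 * (mean φ * (1 - mean φ)) := by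
    have nonneg : 0 ≤ mean φ := mean_nonneg φ
    have le_one : 0 ≤ 1 - mean φ := mean_not φ ▸ mean_nonneg _
    cases le_total (mean φ) (1 / 2) <;> nlinarith
  linarith

end Talagrand

section Sorting

variable {f : (Fin n → Bool) → Bool} {i j : Fin n} {l : List (Fin n)} {x : Fin n → Bool}

/-- The function obtained from `f` by sorting its two values on every edge in dimension `i`. -/
def sortCoord (i : Fin n) (f : (Fin n → Bool) → Bool) (x : Fin n → Bool) : Bool :=
  bif x i then f (Function.update x i false) || f (Function.update x i true)
  else f (Function.update x i false) && f (Function.update x i true)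

lemma sortCoord_update_false (i : Fin n) (f : (Fin n → Bool) → Bool) (x : Fin n → Bool) :
    sortCoord i f (Function.update x i false) =
      (f (Function.update x i false) && f (Function.update x i true)) := by
  simp [sortCoord]

lemma sortCoord_update_true (i : Fin n) (f : (Fin n → Bool) → Bool) (x : Fin n → Bool) :
    sortCoord i f (Function.update x i true) =
      (f (Function.update x i false) || f (Function.update x i true)) := by
  simp [sortCoord]

lemma sortCoord_sortCoord_self (i : Fin n) (f : (Fin n → Bool) → Bool) :
    sortCoord i (sortCoord i f) = sortCoord i f := by
  ext1 x
  simp only [sortCoord, Function.update_self, Function.update_idem]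
  cases x i <;> cases f (Function.update x i false) <;>
    cases f (Function.update x i true) <;> rfl

lemma sortCoord_update_xor (i : Fin n) (f : (Fin n → Bool) → Bool) (x : Fin n → Bool) (b : Bool) :
    (sortCoord i f (Function.update x i b) ^^ f (Function.update x i b)) =
      (f (Function.update x i false) && !f (Function.update x i true)) := by
  cases b <;> simp only [sortCoord_update_false, sortCoord_update_true] <;>
    cases f (Function.update x i false) <;> cases f (Function.update x i true) <;> rfl

lemma sortCoord_sortCoord_xor_of_sortCoord_xor
    (h : sortCoord j (sortCoord i f) x ^^ sortCoord i f x) :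
    sortCoord i (sortCoord j f) x ^^ sortCoord i f x := by
  rcases eq_or_ne i j with rfl | hij
  · simp [sortCoord_sortCoord_self] at h
  · let p (b c : Bool) : Bool := f (Function.update (Function.update x i b) j c)
    have apply_update_i (b : Bool) : f (Function.update x i b) = p b (x j) := by
      simp only [p, Function.update_comm hij, Function.update_eq_self]
    have apply_update_ij (b c : Bool) :
        f (Function.update (Function.update x i b) j c) = p b c := rfl
    simp only [sortCoord, Function.update_of_ne hij, Function.update_of_ne hij.symm,
      Function.update_comm hij.symm, apply_update_ij] at h ⊢
    simp only [apply_update_i] at h ⊢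
    revert h
    cases x i <;> cases x j <;> cases p false false <;> cases p false true <;>
      cases p true false <;> cases p true true <;> decide

lemma sum_edges {M : Type*} [AddCommMonoid M] (i : Fin n) (F : (Fin n → Bool) → M) :
    ∑ x, (F (Function.update x i false) + F (Function.update x i true)) = 2 • ∑ x, F x := by
  have flip_involutive : Function.Involutive fun x : Fin n → Bool => flipC x i := fun x => by
    simp [flipC]
  calc
    _ = ∑ x, (F x + F (flipC x i)) := by
      refine sum_congr rfl fun x _ => ?_
      have hx := Function.update_eq_self i x
      cases h : x i <;> rw [h] at hx <;> simp [flipC, h, hx, add_comm]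
    _ = 2 • ∑ x, F x := by
      rw [sum_add_distrib, two_nsmul, ← Equiv.sum_comp flip_involutive.toPerm F]
      simp

lemma sum_le_sum_of_edges {M : Type*} [AddCommMonoid M] [LinearOrder M]
    [IsOrderedCancelAddMonoid M] (i : Fin n) {F G : (Fin n → Bool) → M}
    (h : ∀ x, F (Function.update x i false) + F (Function.update x i true) ≤
      G (Function.update x i false) + G (Function.update x i true)) :
    ∑ x, F x ≤ ∑ x, G x := by
  have double_le := sum_le_sum fun x (_ : x ∈ univ) => h x
  rw [sum_edges, sum_edges] at double_le
  exact le_of_nsmul_le_nsmul_right two_ne_zero double_le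

lemma hammingDist_eq_sum (f g : (Fin n → Bool) → Bool) :
    hammingDist f g = ∑ x, (f x ^^ g x).toNat := by
  rw [hammingDist, card_filter]
  refine sum_congr rfl fun x _ => ?_
  cases f x <;> cases g x <;> simp

lemma toNat_and_xor_add_toNat_or_xor_le (a b c d : Bool) :
    ((a && b) ^^ (c && d)).toNat + ((a || b) ^^ (c || d)).toNat ≤
      (a ^^ c).toNat + (b ^^ d).toNat := by
  revert a b c d; decide

lemma hammingDist_sortCoord_le (i : Fin n) (f g : (Fin n → Bool) → Bool) :
    hammingDist (sortCoord i f) (sortCoord i g) ≤ hammingDist f g := by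
  rw [hammingDist_eq_sum, hammingDist_eq_sum]
  refine sum_le_sum_of_edges i fun x => ?_
  simp only [sortCoord_update_false, sortCoord_update_true]
  exact toNat_and_xor_add_toNat_or_xor_le _ _ _ _

lemma min_countP_xor_le_left {α : Type*} (L : List α) (p q : α → Bool) (c d : Bool) :
    min (L.countP fun h => (p h && q h) ^^ (c && d)) (L.countP fun h => (p h || q h) ^^ (c || d)) ≤
      L.countP fun h => p h ^^ c := by
  cases c
  · exact min_le_of_left_le <| List.countP_mono_left fun h _ => by simp +contextual
  · exact min_le_of_right_le <| List.countP_mono_left fun h _ => by simp +contextual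

lemma min_countP_xor_le_right {α : Type*} (L : List α) (p q : α → Bool) (c d : Bool) :
    min (L.countP fun h => (p h && q h) ^^ (c && d)) (L.countP fun h => (p h || q h) ^^ (c || d)) ≤
      L.countP fun h => q h ^^ d := by
  simpa only [Bool.and_comm, Bool.or_comm] using min_countP_xor_le_left L q p d c

lemma countP_and_xor_add_countP_or_xor_le {α : Type*} (L : List α) (p q : α → Bool)
    (c d : Bool) :
    L.countP (fun h => (p h && q h) ^^ (c && d)) + L.countP (fun h => (p h || q h) ^^ (c || d)) ≤
      L.countP (fun h => p h ^^ c) + L.countP (fun h => q h ^^ d) := by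
  induction L with
  | nil => rfl
  | cons h L ih =>
    have := toNat_and_xor_add_toNat_or_xor_le (p h) (q h) c d
    simp only [List.countP_cons, Bool.toNat, cond_eq_ite] at this ⊢
    omega

-- `(c, d)` is at least as spread out as `(a, b)`, and `√` is concave and increasing.
lemma sqrt_add_sqrt_le_sqrt_add_sqrt {a b c d : ℝ} (hc : 0 ≤ c) (hd : 0 ≤ d)
    (h : c + d ≤ a + b) (ha : min c d ≤ a) (hb : min c d ≤ b) : √c + √d ≤ √a + √b := by
  have a_nonneg : 0 ≤ a := (le_min hc hd).trans ha
  have b_nonneg : 0 ≤ b := (le_min hc hd).trans hb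
  have mul_le : c * d ≤ a * b := by
    rcases min_cases c d with ⟨hm, _⟩ | ⟨hm, _⟩ <;> rw [hm] at ha hb <;>
      nlinarith [mul_nonneg (sub_nonneg.2 ha) (sub_nonneg.2 hb)]
  have sqrt_mul_le := Real.sqrt_le_sqrt mul_le
  rw [Real.sqrt_mul hc, Real.sqrt_mul a_nonneg] at sqrt_mul_le
  refine le_of_sq_le_sq ?_ (by positivity)
  rw [add_sq, add_sq, Real.sq_sqrt hc, Real.sq_sqrt hd, Real.sq_sqrt a_nonneg,
    Real.sq_sqrt b_nonneg]
  linarith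

lemma sum_sqrt_add_countP_sortCoord_le (i : Fin n) {e : (Fin n → Bool) → ℕ}
    (he : ∀ x b, e (Function.update x i b) = e x) (L : List ((Fin n → Bool) → Bool))
    (g : (Fin n → Bool) → Bool) :
    ∑ x, √((e x + L.countP fun h => sortCoord i h x ^^ sortCoord i g x : ℕ) : ℝ) ≤
      ∑ x, √((e x + L.countP fun h => h x ^^ g x : ℕ) : ℝ) := by
  refine sum_le_sum_of_edges i fun x => ?_
  simp only [he, sortCoord_update_false, sortCoord_update_true]
  refine sqrt_add_sqrt_le_sqrt_add_sqrt (Nat.cast_nonneg _) (Nat.cast_nonneg _) ?_ ?_ ?_ <;>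
    norm_cast
  · simp only [add_add_add_comm (e x) _ (e x)]
    exact Nat.add_le_add_left (countP_and_xor_add_countP_or_xor_le L _ _ _ _) _
  · rw [min_add_add_left]
    exact Nat.add_le_add_left (min_countP_xor_le_left L _ _ _ _) _
  · rw [min_add_add_left]
    exact Nat.add_le_add_left (min_countP_xor_le_right L _ _ _ _) _

/-- The function obtained from `f` by applying `sortCoord i` for the members `i` of `l`, the head
of `l` first. -/
def sortAlong (l : List (Fin n)) (f : (Fin n → Bool) → Bool) : (Fin n → Bool) → Bool :=
  l.foldl (fun g i => sortCoord i g) f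

lemma sortAlong_cons (i : Fin n) (l : List (Fin n)) (f : (Fin n → Bool) → Bool) :
    sortAlong (i :: l) f = sortAlong l (sortCoord i f) :=
  rfl

lemma sortAlong_append (l₁ l₂ : List (Fin n)) (f : (Fin n → Bool) → Bool) :
    sortAlong (l₁ ++ l₂) f = sortAlong l₂ (sortAlong l₁ f) :=
  List.foldl_append

lemma hammingDist_sortAlong_le (l : List (Fin n)) (f g : (Fin n → Bool) → Bool) :
    hammingDist (sortAlong l f) (sortAlong l g) ≤ hammingDist f g := by
  induction l generalizing f g with
  | nil => rfl
  | cons i l ih => exact (ih _ _).trans (hammingDist_sortCoord_le i f g)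

lemma sortAlong_eq_self (h : ∀ i ∈ l, sortCoord i f = f) : sortAlong l f = f := by
  induction l with
  | nil => rfl
  | cons i l ih =>
    rw [List.forall_mem_cons] at h
    rw [sortAlong_cons, h.1, ih h.2]

lemma sortCoord_sortCoord_of_eq_self (h : sortCoord j f = f) :
    sortCoord j (sortCoord i f) = sortCoord i f := by
  ext1 x
  by_contra hx
  simpa [h] using sortCoord_sortCoord_xor_of_sortCoord_xor (bne_iff_ne.2 hx)

lemma sortCoord_sortAlong_of_eq_self (h : sortCoord j f = f) :
    sortCoord j (sortAlong l f) = sortAlong l f := by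
  induction l generalizing f with
  | nil => exact h
  | cons i _ ih => exact ih (sortCoord_sortCoord_of_eq_self h)

lemma sortCoord_sortAlong_of_mem (h : i ∈ l) : sortCoord i (sortAlong l f) = sortAlong l f := by
  induction l generalizing f with
  | nil => exact absurd h List.not_mem_nil
  | cons j l ih =>
    rw [sortAlong_cons]
    rcases List.mem_cons.1 h with rfl | h
    · exact sortCoord_sortAlong_of_eq_self (sortCoord_sortCoord_self i _)
    · exact ih h

lemma sortAlong_sortAlong_of_subset {l' : List (Fin n)} (h : l' ⊆ l) :
    sortAlong l' (sortAlong l f) = sortAlong l f :=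
  sortAlong_eq_self fun _ hi => sortCoord_sortAlong_of_mem (h hi)

/-- The number of members `i` of `l` such that sorting `f` in dimension `i` changes its value
at `x`; for `l` enumerating all dimensions this is `Iminus f x`. -/
def violations (l : List (Fin n)) (f : (Fin n → Bool) → Bool) (x : Fin n → Bool) : ℕ :=
  l.countP fun i => sortCoord i f x ^^ f x

/-- The number of members `i` of `l` for which flipping the membership of `i` in the mask `c`
changes the value at `x` of `f` sorted along the members of `l` selected by `c`. -/
def maskSensitivity (l : List (Fin n)) (c : Fin n → Bool) (f : (Fin n → Bool) → Bool)
    (x : Fin n → Bool) : ℕ :=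
  l.countP fun i => sortAlong (l.filter (Function.update c i true)) f x ^^
    sortAlong (l.filter (Function.update c i false)) f x

lemma violations_cons (i : Fin n) (l : List (Fin n)) (f : (Fin n → Bool) → Bool)
    (x : Fin n → Bool) :
    violations (i :: l) f x = violations l f x + (sortCoord i f x ^^ f x).toNat := by
  rw [violations, List.countP_cons, ← toNat_eq_ite, violations]

lemma filter_update_of_notMem {c : Fin n → Bool} {b : Bool} (h : i ∉ l) :
    l.filter (Function.update c i b) = l.filter c :=
  List.filter_congr fun _ hj => Function.update_of_ne (ne_of_mem_of_not_mem hj h) _ _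

lemma sensitivity_sortAlong_filter_le (l : List (Fin n)) (c : Fin n → Bool)
    (f : (Fin n → Bool) → Bool) (x : Fin n → Bool) :
    sensitivity (fun c => sortAlong (l.filter c) f x) c ≤ maskSensitivity l c f x := by
  rw [maskSensitivity, List.countP_eq_length_filter]
  refine le_trans (card_le_card fun i hi => ?_) (List.toFinset_card_le _)
  have hi := (mem_filter.1 hi).2
  rw [List.mem_toFinset, List.mem_filter]
  refine ⟨?_, hi⟩
  by_contra h
  simp [filter_update_of_notMem h] at hi

lemma sortAlong_filter_cons (i : Fin n) (l : List (Fin n)) (c : Fin n → Bool)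
    (f : (Fin n → Bool) → Bool) :
    sortAlong ((i :: l).filter c) f =
      sortAlong (l.filter c) (bif c i then sortCoord i f else f) := by
  cases h : c i <;> simp [h, sortAlong_cons]

lemma maskSensitivity_cons (hi : i ∉ l) (c : Fin n → Bool) (f : (Fin n → Bool) → Bool)
    (x : Fin n → Bool) :
    maskSensitivity (i :: l) c f x =
      maskSensitivity l c (bif c i then sortCoord i f else f) x +
        (sortAlong (l.filter c) (sortCoord i f) x ^^ sortAlong (l.filter c) f x).toNat := by
  have tail : ∀ j ∈ l, ∀ b, Function.update c j b i = c i := fun j hj b =>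
    Function.update_of_ne (ne_of_mem_of_not_mem hj hi).symm _ _
  simp only [maskSensitivity, List.countP_cons, sortAlong_filter_cons, Function.update_self,
    cond_true, cond_false, filter_update_of_notMem hi]
  congr 1
  · exact List.countP_congr fun j hj => by rw [tail j hj, tail j hj]
  · exact (toNat_eq_ite _).symm

lemma violations_sortCoord_le (i : Fin n) (l : List (Fin n)) (f : (Fin n → Bool) → Bool)
    (x : Fin n → Bool) :
    violations l (sortCoord i f) x ≤
      l.countP fun j => sortCoord i (sortCoord j f) x ^^ sortCoord i f x :=
  List.countP_mono_left fun _ _ => sortCoord_sortCoord_xor_of_sortCoord_xor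

lemma sum_sqrt_add_violations_sortCoord_le (i : Fin n) (l : List (Fin n))
    (f : (Fin n → Bool) → Bool) (L : List ((Fin n → Bool) → Bool)) :
    ∑ x, √((((sortCoord i f x ^^ f x).toNat +
      L.countP fun h => sortCoord i h x ^^ sortCoord i f x) +
      violations l (sortCoord i f) x : ℕ) : ℝ) ≤
    ∑ x, √((((sortCoord i f x ^^ f x).toNat + L.countP fun h => h x ^^ f x) +
      violations l f x : ℕ) : ℝ) := by
  have edge_invariant (x : Fin n → Bool) (b : Bool) :
      (sortCoord i f (Function.update x i b) ^^ f (Function.update x i b)).toNat =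
        (sortCoord i f x ^^ f x).toNat := by
    rw [sortCoord_update_xor, ← sortCoord_update_xor i f x (x i), Function.update_eq_self]
  refine (sum_le_sum fun x _ => ?_).trans <| (sum_sqrt_add_countP_sortCoord_le i
    (e := fun x => (sortCoord i f x ^^ f x).toNat) edge_invariant
    (L ++ l.map fun j => sortCoord j f) f).trans_eq (sum_congr rfl fun x _ => ?_)
  · have := violations_sortCoord_le i l f x
    simp only [List.countP_append, List.countP_map, Function.comp_def, ← add_assoc]
    gcongr
  · simp only [List.countP_append, List.countP_map, Function.comp_def, ← add_assoc, violations]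

theorem sum_sqrt_potential_le (hl : l.Nodup) (c : Fin n → Bool) (f : (Fin n → Bool) → Bool)
    (L : List ((Fin n → Bool) → Bool)) :
    ∑ x, √(((L.countP fun h => sortAlong (l.filter c) h x ^^ sortAlong (l.filter c) f x) +
      maskSensitivity l c f x : ℕ) : ℝ) ≤
    ∑ x, √(((L.countP fun h => h x ^^ f x) + violations l f x : ℕ) : ℝ) := by
  induction l generalizing f L with
  | nil => rfl
  | cons i l ih =>
    obtain ⟨hi, hl⟩ := List.nodup_cons.1 hl
    simp only [maskSensitivity_cons hi, sortAlong_filter_cons]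
    have sum_congr_nat {u v : (Fin n → Bool) → ℕ} (huv : ∀ x, u x = v x) :
        ∑ x, √(u x : ℝ) = ∑ x, √(v x : ℝ) := by simp only [huv]
    cases c i
    -- The skipped sort of `f` joins the comparison functions.
    · refine (sum_congr_nat fun x => ?_).trans_le <|
        (ih hl f (sortCoord i f :: L)).trans_eq (sum_congr_nat fun x => ?_)
      · simp only [cond_false, List.countP_cons, ← toNat_eq_ite]
        ring
      · simp only [violations_cons, List.countP_cons, ← toNat_eq_ite]
        ring
    -- The sort is performed, and the unsorted `f` joins the comparison functions.
    · refine (sum_congr_nat fun x => ?_).trans_le <|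
        (ih hl (sortCoord i f) (f :: L.map (sortCoord i))).trans <|
        (sum_congr_nat fun x => ?_).trans_le <|
        (sum_sqrt_add_violations_sortCoord_le i l f L).trans_eq (sum_congr_nat fun x => ?_)
      · simp only [cond_true, List.countP_cons, ← toNat_eq_ite, List.countP_map, Function.comp_def,
          Bool.xor_comm (sortAlong _ f x)]
        ring
      · simp only [List.countP_cons, ← toNat_eq_ite, List.countP_map, Function.comp_def,
          Bool.xor_comm (f x)]
        ring
      · rw [violations_cons]
        ring

theorem expect_hammingDist_sortAlong_filter_not_le (hl : l.Nodup) (f : (Fin n → Bool) → Bool) :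
    𝔼 c : Fin n → Bool, (hammingDist (sortAlong (l.filter c) f)
      (sortAlong (l.filter fun i => !c i) f) : ℝ) ≤ 2 * ∑ x, √(violations l f x : ℝ) := by
  calc
    _ = ∑ x, mean fun c =>
          sortAlong (l.filter c) f x ^^ sortAlong (l.filter fun i => !c i) f x := by
      simp only [hammingDist_eq_sum, Nat.cast_sum, expect_sum_comm, mean]
    _ ≤ ∑ x, 2 * 𝔼 c : Fin n → Bool, √(maskSensitivity l c f x : ℝ) := by
      refine sum_le_sum fun x _ =>
        (mean_xor_comp_not_le fun c => sortAlong (l.filter c) f x).trans ?_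
      gcongr
      exact sensitivity_sortAlong_filter_le _ _ _ _
    _ = 2 * 𝔼 c : Fin n → Bool, ∑ x, √(maskSensitivity l c f x : ℝ) := by
      rw [← mul_sum, expect_sum_comm]
    _ ≤ 2 * ∑ x, √(violations l f x : ℝ) := by
      gcongr
      refine expect_le univ_nonempty fun c _ => ?_
      simpa using sum_sqrt_potential_le hl c f []

end Sorting

section InverseRiffle

variable {α : Type*}

/-- The inverse riffle shuffle of `l` with mask `c`: the members selected by `c` are moved to the
front, and both parts keep their order. -/
def inverseRiffle (c : α → Bool) (l : List α) : List α :=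
  l.filter c ++ l.filter fun a => !c a

/-- The result of `k` successive inverse riffle shuffles of `l`; the mask `B 0` acts last. -/
def inverseRiffles {k : ℕ} (B : Fin k → α → Bool) (l : List α) : List α :=
  (List.ofFn B).foldr inverseRiffle l

lemma inverseRiffle_perm (c : α → Bool) (l : List α) : (inverseRiffle c l).Perm l :=
  List.filter_append_perm c l

lemma filter_inverseRiffle (p c : α → Bool) (l : List α) :
    (inverseRiffle c l).filter p = inverseRiffle c (l.filter p) := by
  simp only [inverseRiffle, List.filter_append, List.filter_comm p]

lemma inverseRiffles_cons {k : ℕ} (c : α → Bool) (B : Fin k → α → Bool) (l : List α) :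
    inverseRiffles (Fin.cons c B : Fin (k + 1) → α → Bool) l =
      inverseRiffle c (inverseRiffles B l) := by
  simp [inverseRiffles, List.ofFn_succ]

lemma inverseRiffles_perm {k : ℕ} (B : Fin k → α → Bool) (l : List α) :
    (inverseRiffles B l).Perm l := by
  rw [inverseRiffles]
  induction List.ofFn B with
  | nil => rfl
  | cons c L ih => exact (inverseRiffle_perm c _).trans ih

lemma filter_inverseRiffles {k : ℕ} (p : α → Bool) (B : Fin k → α → Bool) (l : List α) :
    (inverseRiffles B l).filter p = inverseRiffles B (l.filter p) := by
  rw [inverseRiffles, inverseRiffles]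
  induction List.ofFn B with
  | nil => rfl
  | cons c L ih => rw [List.foldr_cons, List.foldr_cons, filter_inverseRiffle, ih]

lemma expect_countP_filter (p : Fin n → Bool) (l : List (Fin n)) :
    𝔼 c : Fin n → Bool, ((l.filter c).countP p : ℝ) = (l.countP p : ℝ) / 2 := by
  have split (c : Fin n → Bool) : ((l.filter c).countP p : ℝ) +
      (l.filter fun i => !c i).countP p = l.countP p := by
    exact_mod_cast (l.countP_eq_countP_filter_add p c).symm
  have average := expect_congr (rfl : univ = univ) fun c (_ : c ∈ univ) => split c
  rw [expect_add_distrib, expect_comp_not fun c => ((l.filter c).countP p : ℝ),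
    Fintype.expect_const] at average
  linarith

end InverseRiffle

section RandomOrder

variable {l : List (Fin n)}

lemma hammingDist_sortAlong_append_le (l₁ l₂ : List (Fin n)) (f : (Fin n → Bool) → Bool) :
    hammingDist f (sortAlong (l₁ ++ l₂) f) ≤
      hammingDist f (sortAlong l₁ f) + 2 * hammingDist (sortAlong l₁ f) (sortAlong l₂ f) := by
  have idempotent : sortAlong l₂ (sortAlong l₂ f) = sortAlong l₂ f :=
    sortAlong_sortAlong_of_subset (List.Subset.refl l₂)
  calc
    _ ≤ hammingDist f (sortAlong l₁ f) + hammingDist (sortAlong l₁ f) (sortAlong l₂ f) +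
          hammingDist (sortAlong l₂ f) (sortAlong (l₁ ++ l₂) f) :=
      (hammingDist_triangle _ (sortAlong l₂ f) _).trans <|
        Nat.add_le_add_right (hammingDist_triangle _ _ _) _
    _ ≤ hammingDist f (sortAlong l₁ f) + hammingDist (sortAlong l₁ f) (sortAlong l₂ f) +
          hammingDist (sortAlong l₂ f) (sortAlong l₁ f) := by
      gcongr
      conv_lhs => rw [sortAlong_append, ← idempotent]
      exact hammingDist_sortAlong_le l₂ _ _
    _ = _ := by rw [hammingDist_comm (sortAlong l₂ f)]; ring

lemma hammingDist_sortAlong_le_sum_violations (l : List (Fin n)) (f : (Fin n → Bool) → Bool) :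
    hammingDist f (sortAlong l f) ≤ ∑ x, violations l f x := by
  induction l with
  | nil => simp [sortAlong, violations]
  | cons i l ih =>
    calc
      _ ≤ hammingDist f (sortAlong l f) + hammingDist (sortAlong l f) (sortAlong (i :: l) f) :=
        hammingDist_triangle _ _ _
      _ ≤ ∑ x, violations l f x + hammingDist (sortCoord i f) f := by
        rw [hammingDist_comm (sortCoord i f), sortAlong_cons]
        exact add_le_add ih (hammingDist_sortAlong_le l _ _)
      _ = ∑ x, violations (i :: l) f x := by
        simp only [hammingDist_eq_sum, ← sum_add_distrib, violations_cons]

lemma expect_violations_filter (l : List (Fin n)) (f : (Fin n → Bool) → Bool) (x : Fin n → Bool) :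
    𝔼 c : Fin n → Bool, (violations (l.filter c) f x : ℝ) = (violations l f x : ℝ) / 2 :=
  expect_countP_filter _ l

lemma expect_sum_sqrt_violations_filter_le (l : List (Fin n)) (f : (Fin n → Bool) → Bool) :
    𝔼 c : Fin n → Bool, ∑ x, √(violations (l.filter c) f x : ℝ) ≤
      3 / 4 * ∑ x, √(violations l f x : ℝ) := by
  rw [expect_sum_comm, mul_sum]
  refine sum_le_sum fun x _ => (expect_sqrt_le fun _ => Nat.cast_nonneg _).trans ?_
  rw [expect_violations_filter, Real.sqrt_le_left (by positivity), mul_pow,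
    Real.sq_sqrt (Nat.cast_nonneg _)]
  linarith [(violations l f x).cast_nonneg (α := ℝ)]

lemma expect_hammingDist_sortAlong_inverseRiffle_le (hl : l.Nodup) (f : (Fin n → Bool) → Bool) :
    𝔼 c : Fin n → Bool, (hammingDist f (sortAlong (inverseRiffle c l) f) : ℝ) ≤
      𝔼 c : Fin n → Bool, (hammingDist f (sortAlong (l.filter c) f) : ℝ) +
        4 * ∑ x, √(violations l f x : ℝ) := by
  calc
    _ ≤ 𝔼 c : Fin n → Bool, ((hammingDist f (sortAlong (l.filter c) f) : ℝ) +
          2 * hammingDist (sortAlong (l.filter c) f) (sortAlong (l.filter fun i => !c i) f)) :=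
      expect_le_expect fun c _ => mod_cast hammingDist_sortAlong_append_le _ _ f
    _ ≤ _ := by
      rw [expect_add_distrib, ← mul_expect]
      linarith [expect_hammingDist_sortAlong_filter_not_le hl f]

lemma expect_hammingDist_sortAlong_inverseRiffles_succ_le (hl : l.Nodup) (k : ℕ)
    (f : (Fin n → Bool) → Bool) :
    𝔼 B : Fin (k + 1) → Fin n → Bool, (hammingDist f (sortAlong (inverseRiffles B l) f) : ℝ) ≤
      𝔼 c : Fin n → Bool, 𝔼 B : Fin k → Fin n → Bool,
        (hammingDist f (sortAlong (inverseRiffles B (l.filter c)) f) : ℝ) +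
      4 * ∑ x, √(violations l f x : ℝ) := by
  have violations_eq (B : Fin k → Fin n → Bool) (x : Fin n → Bool) :
      violations (inverseRiffles B l) f x = violations l f x :=
    (inverseRiffles_perm B l).countP_eq _
  have step (B : Fin k → Fin n → Bool) := expect_hammingDist_sortAlong_inverseRiffle_le
    ((inverseRiffles_perm B l).nodup_iff.2 hl) f
  simp only [violations_eq, filter_inverseRiffles] at step
  calc
    _ = 𝔼 B : Fin k → Fin n → Bool, 𝔼 c : Fin n → Bool,
          (hammingDist f (sortAlong (inverseRiffle c (inverseRiffles B l)) f) : ℝ) := by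
      rw [expect_fin_cons, expect_comm]
      simp only [inverseRiffles_cons]
    _ ≤ _ := expect_le_expect fun B _ => step B
    _ = _ := by rw [expect_add_distrib, Fintype.expect_const, expect_comm]

theorem expect_hammingDist_sortAlong_inverseRiffles_le (hl : l.Nodup) (k : ℕ)
    (f : (Fin n → Bool) → Bool) :
    𝔼 B : Fin k → Fin n → Bool, (hammingDist f (sortAlong (inverseRiffles B l) f) : ℝ) ≤
      16 * ∑ x, √(violations l f x : ℝ) + (∑ x, (violations l f x : ℝ)) / 2 ^ k := by
  induction k generalizing l with
  | zero =>
    have sqrt_nonneg : 0 ≤ ∑ x, √(violations l f x : ℝ) := by positivity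
    simp only [inverseRiffles, List.ofFn_zero, List.foldr_nil, Fintype.expect_const, pow_zero,
      div_one]
    have base : (hammingDist f (sortAlong l f) : ℝ) ≤ ∑ x, (violations l f x : ℝ) :=
      mod_cast hammingDist_sortAlong_le_sum_violations l f
    linarith
  | succ k ih =>
    calc
      _ ≤ 𝔼 c : Fin n → Bool, (16 * ∑ x, √(violations (l.filter c) f x : ℝ) +
            (∑ x, (violations (l.filter c) f x : ℝ)) / 2 ^ k) +
          4 * ∑ x, √(violations l f x : ℝ) := by
        grw [expect_hammingDist_sortAlong_inverseRiffles_succ_le hl]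
        gcongr with c
        exact ih (hl.filter _)
      _ = 16 * 𝔼 c : Fin n → Bool, ∑ x, √(violations (l.filter c) f x : ℝ) +
            (∑ x, (violations l f x : ℝ)) / 2 ^ (k + 1) + 4 * ∑ x, √(violations l f x : ℝ) := by
        rw [expect_add_distrib, ← mul_expect, ← expect_div, expect_sum_comm univ univ fun c x =>
          (violations (l.filter c) f x : ℝ)]
        simp only [expect_violations_filter, ← sum_div, pow_succ', div_div]
      _ ≤ _ := by linarith [expect_sum_sqrt_violations_filter_le l f]

end RandomOrder

section Monotone

lemma apply_update_false_le_of_sortCoord_eq_self {g : (Fin n → Bool) → Bool} {i : Fin n}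
    (h : sortCoord i g = g) (x : Fin n → Bool) :
    g (Function.update x i false) ≤ g (Function.update x i true) := by
  have apply_true := sortCoord_update_true i g x
  rw [h] at apply_true
  exact apply_true ▸ Bool.left_le_or _ _

lemma monoB_of_forall_sortCoord_eq_self {g : (Fin n → Bool) → Bool}
    (h : ∀ i, sortCoord i g = g) : monoB g := by
  suffices Monotone g from fun x y hxy => this hxy
  let _ : LocallyFiniteOrder (Fin n → Bool) := Fintype.toLocallyFiniteOrder
  refine (monotone_iff_forall_covBy g).2 fun x y hxy => ?_
  obtain ⟨i, b, hb, rfl⟩ := Pi.covBy_iff_exists_right_eq.1 hxy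
  obtain ⟨hx, rfl⟩ := Bool.lt_iff.1 hb.lt
  simpa [← hx] using apply_update_false_le_of_sortCoord_eq_self (h i) x

lemma distMono_mul_two_pow_le_hammingDist {f g : (Fin n → Bool) → Bool} (hg : monoB g) :
    distMono f * 2 ^ n ≤ hammingDist f g := by
  rw [← le_div_iff₀ (by positivity)]
  refine csInf_le ⟨0, ?_⟩ ⟨g, hg, rfl⟩
  rintro _ ⟨g, -, rfl⟩
  positivity

lemma sortCoord_xor_iff_decEdge (f : (Fin n → Bool) → Bool) (x : Fin n → Bool) (i : Fin n) :
    (sortCoord i f x ^^ f x) = true ↔ decEdge f x i := by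
  have := sortCoord_update_xor i f x (x i)
  rw [Function.update_eq_self] at this
  simp [this, decEdge]

lemma Iminus_eq_violations (f : (Fin n → Bool) → Bool) (x : Fin n → Bool) :
    Iminus f x = violations (List.finRange n) f x := by
  have := (List.nodup_finRange n).card_eq_countP (P := decEdge f x)
  rw [List.toFinset_finRange] at this
  rw [Iminus, this, violations]
  exact List.countP_congr fun i _ =>
    decide_eq_true_iff.trans (sortCoord_xor_iff_decEdge f x i).symm

theorem distMono_mul_two_pow_le (f : (Fin n → Bool) → Bool) :
    distMono f * 2 ^ n ≤ 16 * ∑ x, √(Iminus f x : ℝ) := by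
  simp only [Iminus_eq_violations]
  set l := List.finRange n
  have le_hammingDist (k : ℕ) (B : Fin k → Fin n → Bool) :
      distMono f * 2 ^ n ≤ hammingDist f (sortAlong (inverseRiffles B l) f) :=
    distMono_mul_two_pow_le_hammingDist <| monoB_of_forall_sortCoord_eq_self fun i =>
      sortCoord_sortAlong_of_mem ((inverseRiffles_perm B l).mem_iff.2 (List.mem_finRange i))
  have le_for_all_k (k : ℕ) : distMono f * 2 ^ n ≤
      16 * ∑ x, √(violations l f x : ℝ) + (∑ x, (violations l f x : ℝ)) / 2 ^ k :=
    (le_expect univ_nonempty fun B _ => le_hammingDist k B).trans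
      (expect_hammingDist_sortAlong_inverseRiffles_le (List.nodup_finRange n) k f)
  refine ge_of_tendsto' (x := Filter.atTop) ?_ le_for_all_k
  simpa using tendsto_const_nhds.add
    (tendsto_const_nhds.div_atTop (tendsto_pow_atTop_atTop_of_one_lt (one_lt_two (α := ℝ))))

end Monotone

/-- there is a universal constant `c > 0` such that whenever
`f` is `ε`-far from monotone, `(1/2^n)·Σ_x √(I_f⁻(x)) ≥ c·ε`. -/
theorem stmt5 : ∃ c : ℝ, 0 < c ∧ ∀ n : ℕ, 1 ≤ n → ∀ ε : ℝ, 0 < ε →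
    ∀ f : (Fin n → Bool) → Bool, ε ≤ distMono f →
    c * ε ≤ (1 / 2 ^ n) * ∑ x : Fin n → Bool, Real.sqrt (Iminus f x) := by
  refine ⟨1 / 16, by norm_num, fun n _ ε _ f hf => ?_⟩
  calc
    1 / 16 * ε ≤ 1 / 16 * distMono f := by gcongr
    _ = 1 / 2 ^ n * (1 / 16 * (distMono f * 2 ^ n)) := by field_simp
    _ ≤ 1 / 2 ^ n * ∑ x : Fin n → Bool, √(Iminus f x : ℝ) := by
      gcongr
      linarith [distMono_mul_two_pow_le f]
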